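/- (Guard_KAB for Yahalom.) If evs ∈ ya, A ∉ bad, B ∉ bad and Says Server A ⟨Crypt (shrK A) ⟨Agent B, Key K, Nonce NA, Nonce NB⟩, Crypt (shrK B) ⟨Agent A, Key K⟩⟩ ∈ set evs, then GuardK K {shrK A, shrK B} (spies evs), i.e. the session key K is guarded in all traffic by the shared keys of A and B. -/

import Mathlib

inductive agent : Type
  | Server : agent
  | Friend : ℕ → agent
  | Spy : agent
deriving DecidableEq

inductive msg : Type
  | Agent : agent → msg
  | Number : ℕ → msg
  | Nonce : ℕ → msg
  | Key : ℕ → msg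
  | Hash : msg → msg
  | MPair : msg → msg → msg
  | Crypt : ℕ → msg → msg
deriving DecidableEq

inductive partsP (H : Set msg) : msg → Prop
  | Inj : ∀ X, X ∈ H → partsP H X
  | Fst : ∀ X Y, partsP H (msg.MPair X Y) → partsP H X
  | Snd : ∀ X Y, partsP H (msg.MPair X Y) → partsP H Y
  | Body : ∀ K X, partsP H (msg.Crypt K X) → partsP H X

/-- `parts H`: sub-components of messages of `H`. -/
def parts (H : Set msg) : Set msg := {X | partsP H X}

inductive analzP (invKey : ℕ → ℕ) (H : Set msg) : msg → Prop
  | Inj : ∀ X, X ∈ H → analzP invKey H X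
  | Fst : ∀ X Y, analzP invKey H (msg.MPair X Y) → analzP invKey H X
  | Snd : ∀ X Y, analzP invKey H (msg.MPair X Y) → analzP invKey H Y
  | Decrypt : ∀ K X, analzP invKey H (msg.Crypt K X) →
      analzP invKey H (msg.Key (invKey K)) → analzP invKey H X

/-- `analz invKey H`: what can be obtained by decomposing and decrypting messages of `H`. -/
def analz (invKey : ℕ → ℕ) (H : Set msg) : Set msg := {X | analzP invKey H X}

inductive synthP (H : Set msg) : msg → Prop
  | Inj : ∀ X, X ∈ H → synthP H X
  | Ag : ∀ a, synthP H (msg.Agent a)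
  | Num : ∀ n, synthP H (msg.Number n)
  | Hsh : ∀ X, synthP H X → synthP H (msg.Hash X)
  | Pr : ∀ X Y, synthP H X → synthP H Y → synthP H (msg.MPair X Y)
  | Cry : ∀ K X, synthP H X → msg.Key K ∈ H → synthP H (msg.Crypt K X)

/-- `synth H`: messages that can be synthesized from `H`. -/
def synth (H : Set msg) : Set msg := {X | synthP H X}

inductive guardP (invKey : ℕ → ℕ) (n : ℕ) (Ks : Set ℕ) : msg → Prop
  | No_Nonce : ∀ X, msg.Nonce n ∉ parts {X} → guardP invKey n Ks X
  | Guard : ∀ K X, invKey K ∈ Ks → guardP invKey n Ks (msg.Crypt K X)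
  | Cry : ∀ K X, guardP invKey n Ks X → guardP invKey n Ks (msg.Crypt K X)
  | Pr : ∀ X Y, guardP invKey n Ks X → guardP invKey n Ks Y →
      guardP invKey n Ks (msg.MPair X Y)

/-- `guard n Ks`: messages in which `Nonce n` is guarded by the keys of `Ks`. -/
def guardMsg (invKey : ℕ → ℕ) (n : ℕ) (Ks : Set ℕ) : Set msg := {X | guardP invKey n Ks X}

/-- `Guard n Ks H`: every message of `H` lies in `guard n Ks`. -/
def Guard (invKey : ℕ → ℕ) (n : ℕ) (Ks : Set ℕ) (H : Set msg) : Prop :=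
  ∀ X ∈ H, X ∈ guardMsg invKey n Ks
inductive event : Type
  | Says : agent → agent → msg → event
deriving DecidableEq

def msgOf : event → msg
  | event.Says _ _ X => X

/-- Set of messages sent in a trace. -/
def sent (evs : List event) : Set msg :=
  {X | ∃ A B, event.Says A B X ∈ evs}
inductive guardKP (invKey : ℕ → ℕ) (k : ℕ) (Ks : Set ℕ) : msg → Prop
  | No_Key : ∀ X, msg.Key k ∉ parts {X} → guardKP invKey k Ks X
  | Guard : ∀ K X, invKey K ∈ Ks → guardKP invKey k Ks (msg.Crypt K X)
  | Cry : ∀ K X, guardKP invKey k Ks X → guardKP invKey k Ks (msg.Crypt K X)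
  | Pr : ∀ X Y, guardKP invKey k Ks X → guardKP invKey k Ks Y →
      guardKP invKey k Ks (msg.MPair X Y)

/-- `guardK k Ks`: messages in which `Key k` is guarded by the keys of `Ks`. -/
def guardKMsg (invKey : ℕ → ℕ) (k : ℕ) (Ks : Set ℕ) : Set msg := {X | guardKP invKey k Ks X}

/-- `GuardK k Ks H`: every message of `H` lies in `guardK k Ks`. -/
def GuardK (invKey : ℕ → ℕ) (k : ℕ) (Ks : Set ℕ) (H : Set msg) : Prop :=
  ∀ X ∈ H, X ∈ guardKMsg invKey k Ks
/-- Initial knowledge of each agent in a shared-key infrastructure: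
every agent knows its own shared key; the spy moreover knows
the shared keys of the bad agents. -/
def initStateS (shrK : agent → ℕ) (bad : Set agent) : agent → Set msg :=
  fun A =>
    match A with
    | agent.Spy => {X | ∃ B ∈ bad, X = msg.Key (shrK B)}
    | _ => {msg.Key (shrK A)}

/-- `spies evs`: the shared keys of the bad agents and every message sent in `evs`. -/
def spiesS (shrK : agent → ℕ) (bad : Set agent) (evs : List event) : Set msg :=
  initStateS shrK bad agent.Spy ∪ sent evs

/-- `used evs`: parts of all agents' initial knowledge and of all messages sent in `evs`. -/
def usedS (shrK : agent → ℕ) (bad : Set agent) (evs : List event) : Set msg :=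
  parts ((⋃ A, initStateS shrK bad A) ∪ sent evs)
/-- The Yahalom protocol. -/
inductive ya (invKey : ℕ → ℕ) (shrK : agent → ℕ) (bad : Set agent) : List event → Prop
  | Nil : ya invKey shrK bad []
  | Fake : ∀ evs B X, ya invKey shrK bad evs →
      X ∈ synth (analz invKey (spiesS shrK bad evs)) →
      ya invKey shrK bad (event.Says agent.Spy B X :: evs)
  | YA1 : ∀ evs A B NA, ya invKey shrK bad evs →
      msg.Nonce NA ∉ usedS shrK bad evs →
      ya invKey shrK bad (event.Says A B (msg.MPair (msg.Agent A) (msg.Nonce NA)) :: evs)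
  | YA2 : ∀ evs A A' B NA NB, ya invKey shrK bad evs →
      msg.Nonce NB ∉ usedS shrK bad evs →
      event.Says A' B (msg.MPair (msg.Agent A) (msg.Nonce NA)) ∈ evs →
      ya invKey shrK bad (event.Says B agent.Server (msg.MPair (msg.Agent B)
        (msg.Crypt (shrK B)
          (msg.MPair (msg.Agent A) (msg.MPair (msg.Nonce NA) (msg.Nonce NB))))) :: evs)
  | YA3 : ∀ evs A B B' NA NB K, ya invKey shrK bad evs →
      msg.Key K ∉ usedS shrK bad evs →
      event.Says B' agent.Server (msg.MPair (msg.Agent B)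
        (msg.Crypt (shrK B)
          (msg.MPair (msg.Agent A) (msg.MPair (msg.Nonce NA) (msg.Nonce NB))))) ∈ evs →
      ya invKey shrK bad (event.Says agent.Server A (msg.MPair
        (msg.Crypt (shrK A) (msg.MPair (msg.Agent B)
          (msg.MPair (msg.Key K) (msg.MPair (msg.Nonce NA) (msg.Nonce NB)))))
        (msg.Crypt (shrK B) (msg.MPair (msg.Agent A) (msg.Key K)))) :: evs)
  | YA4 : ∀ evs A B S NA NB K Y, ya invKey shrK bad evs →
      event.Says A B (msg.MPair (msg.Agent A) (msg.Nonce NA)) ∈ evs →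
      event.Says S A (msg.MPair
        (msg.Crypt (shrK A) (msg.MPair (msg.Agent B)
          (msg.MPair (msg.Key K) (msg.MPair (msg.Nonce NA) (msg.Nonce NB))))) Y) ∈ evs →
      ya invKey shrK bad (event.Says A B (msg.MPair Y (msg.Crypt K (msg.Nonce NB))) :: evs)

/-!
A shared key of an uncompromised agent never occurs in the traffic, not even as a part of a message,
because the server only issues fresh keys and the spy cannot make up a key. Hence the spy never
opens a message encrypted under `shrK A` or `shrK B`, and whatever he derives from traffic in which
`K` is guarded by these two keys is again guarded. When the server issues `K`, it is fresh, so the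
earlier traffic is trivially guarded, and the message that introduces `K` is guarded by
construction. Every later step preserves guardedness: the server never issues `K` a second time, and
an honest agent reveals no key beyond those in a component it forwards of a message already sent.
-/

section Parts

variable {G H : Set msg} {X Z : msg}

theorem subset_parts (H : Set msg) : H ⊆ parts H :=
  fun X hX => partsP.Inj X hX

theorem parts_subset_iff : parts G ⊆ parts H ↔ G ⊆ parts H := by
  refine ⟨(subset_parts G).trans, fun hGH X hX => ?_⟩
  induction hX with
  | Inj X hX => exact hGH hX
  | Fst X Y _ ih => exact partsP.Fst X Y ih
  | Snd X Y _ ih => exact partsP.Snd X Y ih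
  | Body K X _ ih => exact partsP.Body K X ih

theorem parts_mono (hGH : G ⊆ H) : parts G ⊆ parts H :=
  parts_subset_iff.2 (hGH.trans (subset_parts H))

theorem parts_singleton_subset (hX : X ∈ H) : parts {X} ⊆ parts H :=
  parts_mono (Set.singleton_subset_iff.2 hX)

theorem mem_parts_iff_exists : Z ∈ parts H ↔ ∃ X ∈ H, Z ∈ parts {X} := by
  refine ⟨fun hZ => ?_, fun ⟨X, hX, hZ⟩ => parts_singleton_subset hX hZ⟩
  induction hZ with
  | Inj X hX => exact ⟨X, hX, partsP.Inj X rfl⟩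
  | Fst X Y _ ih => exact ih.imp fun _ => And.imp_right (partsP.Fst X Y)
  | Snd X Y _ ih => exact ih.imp fun _ => And.imp_right (partsP.Snd X Y)
  | Body K X _ ih => exact ih.imp fun _ => And.imp_right (partsP.Body K X)

theorem parts_insert (X : msg) (H : Set msg) : parts (insert X H) = parts {X} ∪ parts H := by
  ext Z
  rw [Set.mem_union, mem_parts_iff_exists, Set.exists_mem_insert, ← mem_parts_iff_exists]

@[simp]
theorem parts_singleton_mpair (X Y : msg) :
    parts {msg.MPair X Y} = insert (msg.MPair X Y) (parts {X} ∪ parts {Y}) := by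
  rw [← parts_insert]
  have hXY : msg.MPair X Y ∈ parts {msg.MPair X Y} := subset_parts _ rfl
  refine Set.Subset.antisymm (fun Z hZ => ?_) (Set.insert_subset hXY (parts_subset_iff.2 ?_))
  · induction hZ with
    | Inj Z hZ => exact Or.inl hZ
    | Fst U V _ ih =>
      obtain hUV | hUV := ih
      · cases hUV
        exact Or.inr (subset_parts _ (Or.inl rfl))
      · exact Or.inr (partsP.Fst U V hUV)
    | Snd U V _ ih =>
      obtain hUV | hUV := ih
      · cases hUV
        exact Or.inr (subset_parts _ (Or.inr rfl))
      · exact Or.inr (partsP.Snd U V hUV)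
    | Body K U _ ih => exact Or.inr (partsP.Body K U (ih.resolve_left (by simp)))
  · rintro _ (rfl | rfl)
    · exact partsP.Fst _ _ hXY
    · exact partsP.Snd _ _ hXY

@[simp]
theorem parts_singleton_crypt (K : ℕ) (X : msg) :
    parts {msg.Crypt K X} = insert (msg.Crypt K X) (parts {X}) := by
  have hKX : msg.Crypt K X ∈ parts {msg.Crypt K X} := subset_parts _ rfl
  refine Set.Subset.antisymm (fun Z hZ => ?_) (Set.insert_subset hKX
    (parts_subset_iff.2 (Set.singleton_subset_iff.2 (partsP.Body K X hKX))))
  induction hZ with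
  | Inj Z hZ => exact Or.inl hZ
  | Fst U V _ ih => exact Or.inr (partsP.Fst U V (ih.resolve_left (by simp)))
  | Snd U V _ ih => exact Or.inr (partsP.Snd U V (ih.resolve_left (by simp)))
  | Body K' U _ ih =>
    obtain hU | hU := ih
    · cases hU
      exact Or.inr (subset_parts _ rfl)
    · exact Or.inr (partsP.Body K' U hU)

theorem parts_singleton_eq_self (hpair : ∀ Y Z, msg.MPair Y Z ≠ X)
    (hcrypt : ∀ K Y, msg.Crypt K Y ≠ X) : parts {X} = {X} := by
  refine Set.Subset.antisymm (fun Z hZ => ?_) (subset_parts _)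
  induction hZ with
  | Inj _ hZ => exact hZ
  | Fst U V _ ih => exact (hpair U V ih).elim
  | Snd U V _ ih => exact (hpair U V ih).elim
  | Body K U _ ih => exact (hcrypt K U ih).elim

@[simp]
theorem parts_singleton_agent (A : agent) : parts {msg.Agent A} = {msg.Agent A} :=
  parts_singleton_eq_self (by simp) (by simp)

@[simp]
theorem parts_singleton_number (n : ℕ) : parts {msg.Number n} = {msg.Number n} :=
  parts_singleton_eq_self (by simp) (by simp)

@[simp]
theorem parts_singleton_nonce (n : ℕ) : parts {msg.Nonce n} = {msg.Nonce n} :=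
  parts_singleton_eq_self (by simp) (by simp)

@[simp]
theorem parts_singleton_key (K : ℕ) : parts {msg.Key K} = {msg.Key K} :=
  parts_singleton_eq_self (by simp) (by simp)

@[simp]
theorem parts_singleton_hash (X : msg) : parts {msg.Hash X} = {msg.Hash X} :=
  parts_singleton_eq_self (by simp) (by simp)

end Parts

section AnalzSynth

variable {invKey : ℕ → ℕ} {H : Set msg} {k : ℕ}

theorem analz_subset_parts : analz invKey H ⊆ parts H := by
  intro X hX
  induction hX with
  | Inj X hX => exact partsP.Inj X hX
  | Fst X Y _ ih => exact partsP.Fst X Y ih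
  | Snd X Y _ ih => exact partsP.Snd X Y ih
  | Decrypt K X _ _ ih _ => exact partsP.Body K X ih

theorem parts_synth_subset : parts (synth H) ⊆ parts H ∪ synth H := by
  intro X hX
  induction hX with
  | Inj X hX => exact Or.inr hX
  | Fst X Y _ ih =>
    obtain hXY | hXY := ih
    · exact Or.inl (partsP.Fst X Y hXY)
    · cases hXY with
      | Inj _ hXY => exact Or.inl (partsP.Fst X Y (subset_parts H hXY))
      | Pr _ _ hX _ => exact Or.inr hX
  | Snd X Y _ ih =>
    obtain hXY | hXY := ih
    · exact Or.inl (partsP.Snd X Y hXY)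
    · cases hXY with
      | Inj _ hXY => exact Or.inl (partsP.Snd X Y (subset_parts H hXY))
      | Pr _ _ _ hY => exact Or.inr hY
  | Body K X _ ih =>
    obtain hKX | hKX := ih
    · exact Or.inl (partsP.Body K X hKX)
    · cases hKX with
      | Inj _ hKX => exact Or.inl (partsP.Body K X (subset_parts H hKX))
      | Cry _ _ hX _ => exact Or.inr hX

theorem key_mem_of_key_mem_synth (hk : msg.Key k ∈ synth H) : msg.Key k ∈ H := by
  cases hk with
  | Inj _ hk => exact hk

theorem key_mem_parts_of_mem_parts_synth_analz
    (hk : msg.Key k ∈ parts (synth (analz invKey H))) : msg.Key k ∈ parts H := by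
  obtain hk | hk := parts_synth_subset hk
  · exact parts_subset_iff.2 analz_subset_parts hk
  · exact analz_subset_parts (key_mem_of_key_mem_synth hk)

end AnalzSynth

section Guard

variable {invKey : ℕ → ℕ} {k : ℕ} {Ks : Set ℕ} {H : Set msg}

theorem guardK_of_key_notMem_parts (hk : msg.Key k ∉ parts H) : GuardK invKey k Ks H :=
  fun X hX => guardKP.No_Key X fun hkX => hk (parts_singleton_subset hX hkX)

theorem guardK_insert {X : msg} :
    GuardK invKey k Ks (insert X H) ↔ X ∈ guardKMsg invKey k Ks ∧ GuardK invKey k Ks H :=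
  Set.forall_mem_insert

theorem mpair_mem_guardKMsg {X Y : msg} :
    msg.MPair X Y ∈ guardKMsg invKey k Ks ↔
      X ∈ guardKMsg invKey k Ks ∧ Y ∈ guardKMsg invKey k Ks := by
  refine ⟨fun hXY => ?_, fun ⟨hX, hY⟩ => guardKP.Pr X Y hX hY⟩
  cases hXY with
  | No_Key _ hk =>
    simp only [parts_singleton_mpair, Set.mem_insert_iff, Set.mem_union, not_or] at hk
    exact ⟨guardKP.No_Key X hk.2.1, guardKP.No_Key Y hk.2.2⟩
  | Pr _ _ hX hY => exact ⟨hX, hY⟩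

theorem crypt_mem_guardKMsg {K : ℕ} {X : msg} :
    msg.Crypt K X ∈ guardKMsg invKey k Ks ↔ invKey K ∈ Ks ∨ X ∈ guardKMsg invKey k Ks := by
  refine ⟨fun hX => ?_, fun h => h.elim (guardKP.Guard K X) (guardKP.Cry K X)⟩
  cases hX with
  | No_Key _ hk =>
    simp only [parts_singleton_crypt, Set.mem_insert_iff, not_or] at hk
    exact Or.inr (guardKP.No_Key X hk.2)
  | Guard _ _ hK => exact Or.inl hK
  | Cry _ _ hX => exact Or.inr hX

theorem guardK_analz (hH : GuardK invKey k Ks H) (hKs : ∀ j ∈ Ks, msg.Key j ∉ analz invKey H) :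
    GuardK invKey k Ks (analz invKey H) := by
  intro X hX
  induction hX with
  | Inj X hX => exact hH X hX
  | Fst X Y _ ih => exact (mpair_mem_guardKMsg.1 ih).1
  | Snd X Y _ ih => exact (mpair_mem_guardKMsg.1 ih).2
  | Decrypt K X _ hK ih _ => exact (crypt_mem_guardKMsg.1 ih).resolve_left fun h => hKs _ h hK

theorem guardK_synth (hH : GuardK invKey k Ks H) : GuardK invKey k Ks (synth H) := by
  intro X hX
  induction hX with
  | Inj X hX => exact hH X hX
  | Ag | Num | Hsh => exact guardKP.No_Key _ (by simp)
  | Pr X Y _ _ hX hY => exact guardKP.Pr X Y hX hY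
  | Cry K X _ _ hX => exact guardKP.Cry K X hX

end Guard

section Knowledge

variable {shrK : agent → ℕ} {bad : Set agent} {evs : List event} {A B : agent} {X : msg}

theorem sent_cons : sent (event.Says A B X :: evs) = insert X (sent evs) := by
  ext Z
  simp only [sent, List.mem_cons, Set.mem_ofPred_eq, Set.mem_insert_iff, event.Says.injEq]
  grind

theorem spiesS_cons :
    spiesS shrK bad (event.Says A B X :: evs) = insert X (spiesS shrK bad evs) := by
  rw [spiesS, sent_cons, Set.union_insert, spiesS]

theorem mem_spiesS_of_says_mem (hX : event.Says A B X ∈ evs) : X ∈ spiesS shrK bad evs :=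
  Or.inr ⟨A, B, hX⟩

theorem parts_spiesS_subset_usedS : parts (spiesS shrK bad evs) ⊆ usedS shrK bad evs :=
  parts_mono (Set.union_subset_union_left _ (Set.subset_iUnion _ agent.Spy))

theorem parts_singleton_subset_usedS (hX : event.Says A B X ∈ evs) :
    parts {X} ⊆ usedS shrK bad evs :=
  (parts_singleton_subset (mem_spiesS_of_says_mem hX)).trans parts_spiesS_subset_usedS

theorem key_shrK_mem_usedS (hspy : agent.Spy ∈ bad) (C : agent) :
    msg.Key (shrK C) ∈ usedS shrK bad evs := by
  have hC : msg.Key (shrK C) ∈ initStateS shrK bad C := by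
    cases C with
    | Server | Friend => exact rfl
    | Spy => exact ⟨agent.Spy, hspy, rfl⟩
  exact subset_parts _ (Or.inl (Set.mem_iUnion_of_mem C hC))

end Knowledge

section Yahalom

variable {invKey : ℕ → ℕ} {shrK : agent → ℕ} {bad : Set agent} {evs : List event}

theorem key_shrK_notMem_parts_spiesS (hinj : Function.Injective shrK) (hspy : agent.Spy ∈ bad)
    {C : agent} (hC : C ∉ bad) (hevs : ya invKey shrK bad evs) :
    msg.Key (shrK C) ∉ parts (spiesS shrK bad evs) := by
  induction hevs with
  | Nil =>
    intro h
    obtain ⟨X, ⟨D, hD, rfl⟩ | ⟨_, _, hX⟩, hCX⟩ := mem_parts_iff_exists.1 h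
    · rw [parts_singleton_key, Set.mem_singleton_iff, msg.Key.injEq] at hCX
      exact hC (hinj hCX ▸ hD)
    · cases hX
  | Fake _ _ _ _ hX ih =>
    rw [spiesS_cons, parts_insert]
    exact not_or.2 ⟨fun h => ih (key_mem_parts_of_mem_parts_synth_analz
      (parts_singleton_subset hX h)), ih⟩
  | YA1 | YA2 => simpa [spiesS_cons, parts_insert]
  | YA3 _ _ _ _ _ _ K _ hK _ ih =>
    have hne : shrK C ≠ K := by
      rintro rfl
      exact hK (key_shrK_mem_usedS hspy C)
    simpa [spiesS_cons, parts_insert, hne]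
  | YA4 _ _ _ _ _ _ _ Y _ _ hS ih =>
    have hY : msg.Key (shrK C) ∉ parts {Y} := fun h =>
      ih (parts_singleton_subset (mem_spiesS_of_says_mem hS) (by simp [h]))
    simpa [spiesS_cons, parts_insert, hY]

theorem ya_of_ya_cons {ev : event} (h : ya invKey shrK bad (ev :: evs)) :
    ya invKey shrK bad evs := by
  cases h <;> assumption

theorem key_notMem_usedS_of_ya_says_server {A B : agent} {K NA NB : ℕ}
    (h : ya invKey shrK bad (event.Says agent.Server A (msg.MPair
      (msg.Crypt (shrK A) (msg.MPair (msg.Agent B)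
        (msg.MPair (msg.Key K) (msg.MPair (msg.Nonce NA) (msg.Nonce NB)))))
      (msg.Crypt (shrK B) (msg.MPair (msg.Agent A) (msg.Key K)))) :: evs)) :
    msg.Key K ∉ usedS shrK bad evs := by
  cases h with
  | YA3 _ _ _ _ _ _ _ _ hK _ => exact hK

theorem guardK_spiesS_cons {ev : event} {k : ℕ} {Ks : Set ℕ}
    (h : ya invKey shrK bad (ev :: evs)) (hk : msg.Key k ∈ usedS shrK bad evs)
    (hKs : ∀ j ∈ Ks, msg.Key j ∉ analz invKey (spiesS shrK bad evs))
    (hguard : GuardK invKey k Ks (spiesS shrK bad evs)) :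
    GuardK invKey k Ks (spiesS shrK bad (ev :: evs)) := by
  cases h with
  | Fake _ _ X _ hX =>
    exact spiesS_cons ▸ guardK_insert.2 ⟨guardK_synth (guardK_analz hguard hKs) X hX, hguard⟩
  | YA1 | YA2 =>
    exact spiesS_cons ▸ guardK_insert.2 ⟨guardKP.No_Key _ (by simp), hguard⟩
  | YA3 _ _ _ _ _ _ K _ hK _ =>
    have hne : k ≠ K := by
      rintro rfl
      exact hK hk
    exact spiesS_cons ▸ guardK_insert.2 ⟨guardKP.No_Key _ (by simp [hne]), hguard⟩
  | YA4 _ _ _ _ _ NB K Y _ _ hS =>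
    have hY : Y ∈ guardKMsg invKey k Ks :=
      (mpair_mem_guardKMsg.1 (hguard _ (mem_spiesS_of_says_mem hS))).2
    have hNB : msg.Crypt K (msg.Nonce NB) ∈ guardKMsg invKey k Ks :=
      guardKP.No_Key _ (by simp)
    exact spiesS_cons ▸ guardK_insert.2 ⟨guardKP.Pr _ _ hY hNB, hguard⟩

end Yahalom

/-- `Guard_KAB` for Yahalom: the session key `K` is guarded by the shared keys
of `A` and `B`. -/
theorem Guard_KAB
    (invKey : ℕ → ℕ) (shrK : agent → ℕ) (bad : Set agent)
    (hinv : ∀ K, invKey (invKey K) = K)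
    (hsym : ∀ A, invKey (shrK A) = shrK A)
    (hinj : Function.Injective shrK)
    (hspy : agent.Spy ∈ bad)
    (evs : List event) (A B : agent) (K NA NB : ℕ)
    (hevs : ya invKey shrK bad evs) (hA : A ∉ bad) (hB : B ∉ bad)
    (hsays : event.Says agent.Server A (msg.MPair
      (msg.Crypt (shrK A) (msg.MPair (msg.Agent B)
        (msg.MPair (msg.Key K) (msg.MPair (msg.Nonce NA) (msg.Nonce NB)))))
      (msg.Crypt (shrK B) (msg.MPair (msg.Agent A) (msg.Key K)))) ∈ evs) :
    GuardK invKey K {shrK A, shrK B} (spiesS shrK bad evs) := by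
  have hsecret : ∀ evs, ya invKey shrK bad evs →
      ∀ j ∈ ({shrK A, shrK B} : Set ℕ), msg.Key j ∉ analz invKey (spiesS shrK bad evs) := by
    rintro evs hevs j (rfl | rfl) hj
    · exact key_shrK_notMem_parts_spiesS hinj hspy hA hevs (analz_subset_parts hj)
    · exact key_shrK_notMem_parts_spiesS hinj hspy hB hevs (analz_subset_parts hj)
  induction evs with
  | nil => cases hsays
  | cons ev evs ih =>
    have hevs' : ya invKey shrK bad evs := ya_of_ya_cons hevs
    obtain rfl | hmem := List.mem_cons.1 hsays
    · have hfresh : msg.Key K ∉ usedS shrK bad evs := key_notMem_usedS_of_ya_says_server hevs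
      rw [spiesS_cons, guardK_insert, mpair_mem_guardKMsg, crypt_mem_guardKMsg,
        crypt_mem_guardKMsg, hsym, hsym]
      exact ⟨⟨Or.inl (Or.inl rfl), Or.inl (Or.inr rfl)⟩,
        guardK_of_key_notMem_parts fun hK => hfresh (parts_spiesS_subset_usedS hK)⟩
    · have hused : msg.Key K ∈ usedS shrK bad evs :=
        parts_singleton_subset_usedS hmem (by simp)
      exact guardK_spiesS_cons hevs hused (hsecret evs hevs') (ih hevs' hmem)
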